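/- Stanley's Hook Content Formula: for a partition λ with at most r rows, s_λ(q, q², …, q^r) = q^{B(λ)} · ∏_{(i,j) ∈ [λ]} (q^{r + j − i} − 1)/(q^{h_{(i,j)}(λ)} − 1), where B(λ) = Σ_i i·λ_i. -/

import Mathlib

/-- `t` is a semistandard Young tableau of shape `λ` (row lengths `l`) with
entries in `{1, …, r}`: rows weakly increase west to east, columns strictly
increase north to south, and `t` is `0` outside the diagram. -/
def IsSSYT (l : ℕ → ℕ) (r : ℕ) (t : ℕ → ℕ → ℕ) : Prop :=
  (∀ i j, 1 ≤ i → 1 ≤ j → j ≤ l i → 1 ≤ t i j ∧ t i j ≤ r) ∧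
  (∀ i j, 1 ≤ i → 1 ≤ j → j + 1 ≤ l i → t i j ≤ t i (j + 1)) ∧
  (∀ i j, 1 ≤ i → 1 ≤ j → j ≤ l (i + 1) → t i j < t (i + 1) j) ∧
  (∀ i j, ¬(1 ≤ i ∧ 1 ≤ j ∧ j ≤ l i) → t i j = 0)

/-- `|t|`, the sum of the entries of the tableau `t` of shape `l`
(with at most `r` rows). -/
def wt (l : ℕ → ℕ) (r : ℕ) (t : ℕ → ℕ → ℕ) : ℕ :=
  ∑ i ∈ Finset.Icc 1 r, ∑ j ∈ Finset.Icc 1 (l i), t i j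

/-- The hook length of the box `(i, j) ∈ [λ]`: arm `l i - j`, plus leg, plus one. -/
def hin (l : ℕ → ℕ) (r i j : ℕ) : ℕ :=
  1 + (l i - j) + ((Finset.Icc (i + 1) r).filter (fun i' => j ≤ l i')).card

/-!
Deleting the entries `n + 1` from a tableau of shape `l` leaves a tableau whose shape interlaces
`l`, so that `s_l(q, …, q^(n + 1))` is a sum over the interlacing shapes. The alternant
`a_l = det (x_k ^ (j + 1))` with `x_k = q ^ (l (n - k) + k)` obeys the same recursion up to a factor
independent of `l`: subtracting from each row the multiple of the previous one that clears the last
column leaves geometric sums running over the interlacing shapes. Hence `s_l * a_0 = a_l`.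

By Vandermonde, `a_l` is a power of `q` times the product of the `q ^ (l i - l k + k - i) - 1` over
the pairs of rows `i < k`. The exponents belonging to a fixed row `i` and the hook lengths of that
row together are exactly `1, 2, …, l i + r - i`, and so are the `k - i` and the `r + j - i`; this
turns `a_l / a_0` into the product of contents over hooks.
-/

section

open Finset

/-- `l 1 ≥ l 2 ≥ ⋯` are the row lengths of a partition with at most `r` rows. Rows are numbered
from `1`; the value `l 0` is irrelevant. -/
structure IsPartition (l : ℕ → ℕ) (r : ℕ) : Prop where
  antitoneOn : AntitoneOn l (Set.Ici 1)
  eq_zero : ∀ i, r < i → l i = 0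

namespace IsPartition

lemma zero (r : ℕ) : IsPartition 0 r :=
  ⟨antitoneOn_const, fun _ _ ↦ rfl⟩

lemma apply_le_apply {l : ℕ → ℕ} {r i k : ℕ} (hl : IsPartition l r) (hi : 1 ≤ i) (hik : i ≤ k) :
    l k ≤ l i :=
  hl.antitoneOn hi (hi.trans hik) hik

end IsPartition

namespace IsSSYT

variable {l : ℕ → ℕ} {r : ℕ} {t : ℕ → ℕ → ℕ}

lemma ne_zero_iff (ht : IsSSYT l r t) {i j : ℕ} : t i j ≠ 0 ↔ 1 ≤ i ∧ 1 ≤ j ∧ j ≤ l i := by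
  refine ⟨not_imp_comm.1 (ht.2.2.2 i j), fun ⟨hi, hj, hji⟩ ↦ ?_⟩
  exact Nat.one_le_iff_ne_zero.1 (ht.1 i j hi hj hji).1

lemma apply_le (ht : IsSSYT l r t) (i j : ℕ) : t i j ≤ r := by
  by_cases h : t i j = 0
  · simp [h]
  · obtain ⟨hi, hj, hji⟩ := ht.ne_zero_iff.1 h
    exact (ht.1 i j hi hj hji).2

lemma monotoneOn_row (ht : IsSSYT l r t) {i : ℕ} (hi : 1 ≤ i) :
    MonotoneOn (t i) (Set.Iic (l i)) := by
  refine monotoneOn_of_le_add_one Set.ordConnected_Iic fun j _ _ hj ↦ ?_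
  rcases Nat.eq_zero_or_pos j with rfl | hj0
  · simp [ht.2.2.2 i 0 (by omega)]
  · exact ht.2.1 i j hi hj0 hj

lemma le_apply (ht : IsSSYT l r t) (hl : AntitoneOn l (Set.Ici 1)) {i j : ℕ} (hi : 1 ≤ i)
    (hj : 1 ≤ j) (hji : j ≤ l i) : i ≤ t i j := by
  induction i, hi using Nat.le_induction with
  | base => exact (ht.1 1 j le_rfl hj hji).1
  | succ i hi ih =>
    have hle : l (i + 1) ≤ l i := hl hi (Set.mem_Ici.2 (by omega)) i.le_succ
    exact (ih (hji.trans hle)).trans_lt (ht.2.2.1 i j hi hj hji)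

lemma le_findGreatest_iff (ht : IsSSYT l r t) {i j n : ℕ} (hi : 1 ≤ i) (hji : j ≤ l i) :
    j ≤ Nat.findGreatest (t i · ≤ n) (l i) ↔ t i j ≤ n := by
  refine ⟨fun h ↦ ?_, Nat.le_findGreatest (P := (t i · ≤ n)) hji⟩
  have hspec : t i (Nat.findGreatest (t i · ≤ n) (l i)) ≤ n :=
    Nat.findGreatest_spec (P := (t i · ≤ n)) (Nat.zero_le _) (by simp [ht.2.2.2 i 0])
  exact (ht.monotoneOn_row hi hji (Nat.findGreatest_le _) h).trans hspec

end IsSSYT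

lemma isSSYT_iff_eq_zero {l : ℕ → ℕ} {r : ℕ} {t : ℕ → ℕ → ℕ} (hl : ∀ i, 1 ≤ i → l i = 0) :
    IsSSYT l r t ↔ t = 0 := by
  constructor
  · intro ht
    funext i j
    refine ht.2.2.2 i j fun ⟨hi, _, _⟩ ↦ ?_
    have := hl i hi
    omega
  · rintro rfl
    refine ⟨fun i j hi hj hji ↦ ?_, fun _ _ _ _ _ ↦ le_rfl, fun i j _ hj hji ↦ ?_,
      fun _ _ _ ↦ rfl⟩
    · have := hl i hi
      omega
    · have := hl (i + 1) (by omega)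
      omega

/-- The row lengths of the partition with parts `b 0, b 1, …, b (n - 1)`, listed from the last row
to the first: row `i` has length `b (n - i)`. -/
def rowLengths {n : ℕ} (b : Fin n → ℕ) (i : ℕ) : ℕ :=
  if h : 1 ≤ i ∧ i ≤ n then b ⟨n - i, by omega⟩ else 0

lemma rowLengths_of_lt {n : ℕ} (b : Fin n → ℕ) {i : ℕ} (hi : n < i) : rowLengths b i = 0 :=
  dif_neg (by omega)

lemma rowLengths_sub {n : ℕ} (b : Fin n → ℕ) (k : Fin n) : rowLengths b (n - k) = b k := by
  have hk := k.2
  rw [rowLengths, dif_pos (by omega)]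
  congr
  omega

lemma rowLengths_comp_sub {n : ℕ} (m : ℕ → ℕ) {i : ℕ} (hi : 1 ≤ i) (hi_le : i ≤ n) :
    rowLengths (fun k : Fin n ↦ m (n - k)) i = m i := by
  rw [rowLengths, dif_pos ⟨hi, hi_le⟩]
  congr 1
  simp only
  omega

/-- The partitions `b` with at most `n` rows that interlace `l`, that is
`l (i + 1) ≤ rowLengths b i ≤ l i`; equivalently, the skew shape `l / b` is a horizontal strip. -/
def interlacing (l : ℕ → ℕ) (n : ℕ) : Finset (Fin n → ℕ) :=
  Fintype.piFinset fun k : Fin n ↦ Icc (l (n - k + 1)) (l (n - k))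

section Interlacing

variable {l : ℕ → ℕ} {n : ℕ} {b : Fin n → ℕ}

lemma mem_interlacing_iff (hl : IsPartition l (n + 1)) :
    b ∈ interlacing l n ↔ ∀ i, 1 ≤ i → l (i + 1) ≤ rowLengths b i ∧ rowLengths b i ≤ l i := by
  simp only [interlacing, Fintype.mem_piFinset, mem_Icc]
  constructor
  · intro h i hi
    rcases le_or_gt i n with hi_le | hi_lt
    · have hk := h ⟨n - i, by omega⟩
      rw [← rowLengths_sub b, Fin.val_mk, Nat.sub_sub_self hi_le] at hk
      exact hk
    · simp [rowLengths_of_lt b hi_lt, hl.eq_zero (i + 1) (by omega)]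
  · intro h k
    rw [← rowLengths_sub b]
    exact h (n - k) (by have := k.2; omega)

lemma isPartition_rowLengths (hl : IsPartition l (n + 1)) (hb : b ∈ interlacing l n) :
    IsPartition (rowLengths b) n := by
  rw [mem_interlacing_iff hl] at hb
  refine ⟨?_, fun i ↦ rowLengths_of_lt b⟩
  refine antitoneOn_of_add_one_le Set.ordConnected_Ici fun i _ hi _ ↦ ?_
  exact (hb (i + 1) (by omega)).2.trans (hb i hi).1

end Interlacing

/-- The filling obtained from `s` by writing `n + 1` in the boxes of shape `l` not occupied
by `s`. -/
def addStrip (l : ℕ → ℕ) (n : ℕ) (s : ℕ → ℕ → ℕ) (i j : ℕ) : ℕ :=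
  if s i j = 0 ∧ 1 ≤ i ∧ 1 ≤ j ∧ j ≤ l i then n + 1 else s i j

/-- The filling obtained from `t` by deleting all entries larger than `n`. -/
def truncate (n : ℕ) (t : ℕ → ℕ → ℕ) (i j : ℕ) : ℕ :=
  if t i j ≤ n then t i j else 0

section Branching

variable {l m : ℕ → ℕ} {n : ℕ} {s t : ℕ → ℕ → ℕ}

lemma isSSYT_addStrip (hlm : ∀ i, 1 ≤ i → l (i + 1) ≤ m i ∧ m i ≤ l i) (hs : IsSSYT m n s) :
    IsSSYT l (n + 1) (addStrip l n s) := by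
  have hle := hs.apply_le
  have hsupp {i j} := hs.ne_zero_iff (i := i) (j := j)
  refine ⟨fun i j hi hj hji ↦ ?_, fun i j hi hj hji ↦ ?_, fun i j hi hj hji ↦ ?_,
    fun i j hij ↦ ?_⟩
  · grind [addStrip]
  · grind [addStrip, IsSSYT]
  · grind [addStrip, IsSSYT]
  · grind [addStrip]

lemma truncate_addStrip (hs : IsSSYT m n s) : truncate n (addStrip l n s) = s := by
  funext i j
  have := hs.apply_le i j
  grind [truncate, addStrip]

lemma addStrip_truncate (ht : IsSSYT l (n + 1) t) : addStrip l n (truncate n t) = t := by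
  funext i j
  have := ht.apply_le i j
  have := ht.ne_zero_iff (i := i) (j := j)
  grind [truncate, addStrip]

lemma exists_isSSYT_truncate (hl : IsPartition l (n + 1)) (ht : IsSSYT l (n + 1) t) :
    ∃ b ∈ interlacing l n, IsSSYT (rowLengths b) n (truncate n t) := by
  let m (i : ℕ) : ℕ := Nat.findGreatest (t i · ≤ n) (l i)
  let b (k : Fin n) : ℕ := m (n - k)
  have hm_le (i : ℕ) : m i ≤ l i := Nat.findGreatest_le _
  have le_m_iff {i j : ℕ} (hi : 1 ≤ i) (hji : j ≤ l i) : j ≤ m i ↔ t i j ≤ n :=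
    ht.le_findGreatest_iff hi hji
  have hbm {i : ℕ} (hi : 1 ≤ i) : rowLengths b i = m i := by
    rcases le_or_gt i n with hi_le | hi_lt
    · exact rowLengths_comp_sub m hi hi_le
    · rw [rowLengths_of_lt b hi_lt]
      by_contra h
      have := (le_m_iff hi (hm_le i)).1 le_rfl
      have := ht.le_apply hl.antitoneOn hi (j := m i) (by omega) (hm_le i)
      omega
  have hsupp {i j : ℕ} := ht.ne_zero_iff (i := i) (j := j)
  have hle := ht.apply_le
  have interlaces {i : ℕ} (hi : 1 ≤ i) : l (i + 1) ≤ m i := by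
    rw [le_m_iff hi (hl.apply_le_apply hi i.le_succ)]
    rcases Nat.eq_zero_or_pos (l (i + 1)) with hzero | hpos
    · simp [hzero, ht.2.2.2 i 0]
    · exact Nat.le_of_lt_succ ((ht.2.2.1 i _ hi hpos le_rfl).trans_le (hle _ _))
  refine ⟨b, (mem_interlacing_iff hl).2 fun i hi ↦ ?_, ?_⟩
  · rw [hbm hi]
    exact ⟨interlaces hi, hm_le i⟩
  refine ⟨fun i j hi hj hji ↦ ?_, fun i j hi hj hji ↦ ?_, fun i j hi hj hji ↦ ?_,
    fun i j hij ↦ ?_⟩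
  · grind [truncate]
  · grind [truncate, IsSSYT]
  · grind [truncate, IsSSYT]
  · grind [truncate]

lemma bijOn_addStrip (hl : IsPartition l (n + 1)) :
    Set.BijOn (addStrip l n) (⋃ b ∈ interlacing l n, {s | IsSSYT (rowLengths b) n s})
      {t | IsSSYT l (n + 1) t} := by
  refine Set.InvOn.bijOn (f' := truncate n) ⟨fun s hs ↦ ?_, fun t ht ↦ addStrip_truncate ht⟩
    (fun s hs ↦ ?_) fun t ht ↦ ?_
  · obtain ⟨b, -, hs⟩ := Set.mem_iUnion₂.1 hs
    exact truncate_addStrip hs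
  · obtain ⟨b, hb, hs⟩ := Set.mem_iUnion₂.1 hs
    exact isSSYT_addStrip ((mem_interlacing_iff hl).1 hb) hs
  · obtain ⟨b, hb, hs⟩ := exists_isSSYT_truncate hl ht
    exact Set.mem_iUnion₂.2 ⟨b, hb, hs⟩

lemma pairwiseDisjoint_isSSYT_rowLengths (I : Set (Fin n → ℕ)) :
    I.PairwiseDisjoint fun b ↦ {s | IsSSYT (rowLengths b) n s} := by
  intro b _ b' _ hne
  refine Set.disjoint_left.2 fun s hs hs' ↦ hne (funext fun k ↦ ?_)
  have hk := k.2
  have h (j : ℕ) := hs.ne_zero_iff (i := n - k) (j := j).symm.trans hs'.ne_zero_iff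
  simp only [rowLengths_sub] at h
  have := h (b k)
  have := h (b' k)
  omega

lemma finite_setOf_isSSYT {r : ℕ} (hl : IsPartition l r) : {t | IsSSYT l r t}.Finite := by
  induction r generalizing l with
  | zero => simp [isSSYT_iff_eq_zero fun i hi ↦ hl.eq_zero i hi]
  | succ n ih =>
    rw [← (bijOn_addStrip hl).image_eq]
    exact .image _ (.biUnion (finite_toSet _) fun b hb ↦ ih (isPartition_rowLengths hl hb))

lemma sum_addStrip_row {i : ℕ} (hi : 1 ≤ i) (hml : m i ≤ l i) (hs : IsSSYT m n s) :
    ∑ j ∈ Icc 1 (l i), addStrip l n s i j =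
      ∑ j ∈ Icc 1 (m i), s i j + (n + 1) * (l i - m i) := by
  have inner : ∑ j ∈ Ioc 0 (m i), addStrip l n s i j = ∑ j ∈ Ioc 0 (m i), s i j :=
    sum_congr rfl fun j hj ↦ by
      have := hs.ne_zero_iff (i := i) (j := j)
      grind [addStrip]
  have strip : ∑ j ∈ Ioc (m i) (l i), addStrip l n s i j = ∑ j ∈ Ioc (m i) (l i), (n + 1) :=
    sum_congr rfl fun j hj ↦ by
      have := hs.ne_zero_iff (i := i) (j := j)
      grind [addStrip]
  change ∑ j ∈ Ioc 0 (l i), _ = ∑ j ∈ Ioc 0 (m i), _ + _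
  rw [← sum_Ioc_consecutive _ (Nat.zero_le _) hml, inner, strip, sum_const, Nat.card_Ioc,
    smul_eq_mul, mul_comm]

lemma wt_addStrip (hml : ∀ i, 1 ≤ i → m i ≤ l i) (hm : m (n + 1) = 0) (hs : IsSSYT m n s) :
    wt l (n + 1) (addStrip l n s) = wt m n s + (n + 1) * ∑ i ∈ Icc 1 (n + 1), (l i - m i) := by
  have hwt : wt m n s = wt m (n + 1) s := by simp [wt, sum_Icc_succ_top, hm]
  rw [hwt, wt, wt, mul_sum, ← sum_add_distrib]
  refine sum_congr rfl fun i hi ↦ ?_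
  have hi := (mem_Icc.1 hi).1
  exact sum_addStrip_row hi (hml i hi) hs

end Branching

/-- The value of the Schur polynomial of shape `l` in `r` variables at `(q, q², …, q^r)`. -/
noncomputable def schur {R : Type*} [CommSemiring R] (q : R) (l : ℕ → ℕ) (r : ℕ) : R :=
  ∑ᶠ t ∈ {t : ℕ → ℕ → ℕ | IsSSYT l r t}, q ^ wt l r t

section Schur

variable {R S : Type*} [CommSemiring R] [CommSemiring S] {l : ℕ → ℕ}

lemma map_schur {r : ℕ} (φ : R →+* S) (q : R) (hl : IsPartition l r) :
    φ (schur q l r) = schur (φ q) l r := by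
  simp only [schur, ← map_pow]
  exact φ.toAddMonoidHom.map_finsum_mem _ (finite_setOf_isSSYT hl)

lemma schur_zero_right (q : R) (hl : IsPartition l 0) : schur q l 0 = 1 := by
  simp [schur, isSSYT_iff_eq_zero fun i hi ↦ hl.eq_zero i hi, wt]

lemma schur_succ {n : ℕ} (q : R) (hl : IsPartition l (n + 1)) :
    schur q l (n + 1) = ∑ b ∈ interlacing l n,
      q ^ ((n + 1) * ∑ i ∈ Icc 1 (n + 1), (l i - rowLengths b i)) * schur q (rowLengths b) n := by
  have hfinite (b) (hb : b ∈ interlacing l n) : {s | IsSSYT (rowLengths b) n s}.Finite :=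
    finite_setOf_isSSYT (isPartition_rowLengths hl hb)
  rw [schur, ← finsum_mem_eq_of_bijOn _ (bijOn_addStrip hl) fun _ _ ↦ rfl]
  simp only [← mem_coe]
  rw [finsum_mem_biUnion (pairwiseDisjoint_isSSYT_rowLengths _) (finite_toSet _) hfinite,
    finsum_mem_coe_finset]
  refine sum_congr rfl fun b hb ↦ ?_
  rw [schur, mul_finsum_mem' _ _ (hfinite b hb)]
  refine finsum_mem_congr rfl fun s hs ↦ ?_
  have hml (i : ℕ) (hi : 1 ≤ i) : rowLengths b i ≤ l i := ((mem_interlacing_iff hl).1 hb i hi).2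
  rw [wt_addStrip hml (rowLengths_of_lt b n.lt_succ_self) hs, pow_add, mul_comm]

end Schur

@[to_additive]
lemma prod_fin_sub {M : Type*} [CommMonoid M] (n : ℕ) (F : ℕ → M) :
    ∏ k : Fin n, F (n - k) = ∏ i ∈ Icc 1 n, F i := by
  rw [Fin.prod_univ_eq_prod_range fun k ↦ F (n - k)]
  exact prod_nbij' (n - ·) (n - ·) (by grind) (by grind) (by grind) (by grind) (by simp)

lemma prod_fin_Ioi_sub {M : Type*} [CommMonoid M] (r : ℕ) (F : ℕ → ℕ → M) :
    ∏ i : Fin r, ∏ j ∈ Ioi i, F (r - i) (r - j) = ∏ a ∈ Icc 1 r, ∏ b ∈ Ioc a r, F b a := by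
  have inner (i : Fin r) :
      ∏ j ∈ Ioi i, F (r - i) (r - j) = ∏ a ∈ Ico 1 (r - i : ℕ), F (r - i) a := by
    refine (prod_map (Ioi i) Fin.valEmbedding fun j ↦ F (r - i) (r - j)).symm.trans ?_
    rw [Fin.map_valEmbedding_Ioi]
    exact prod_nbij' (r - ·) (r - ·) (by grind) (by grind) (by grind) (by grind) (by simp)
  simp_rw [inner]
  rw [prod_fin_sub r fun b ↦ ∏ a ∈ Ico 1 b, F b a]
  exact prod_comm' (by grind)

lemma prod_Icc_prod_Ioc_right {M : Type*} [CommMonoid M] (r : ℕ) (g : ℕ → M) :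
    ∏ i ∈ Icc 1 r, ∏ k ∈ Ioc i r, g k = ∏ k ∈ Icc 1 r, g k ^ (k - 1) := by
  rw [prod_comm' (t' := Icc 1 r) (s' := fun k ↦ Ico 1 k) (by grind)]
  simp

lemma sum_sub_rowLengths {l : ℕ → ℕ} {n : ℕ} (b : Fin n → ℕ) :
    ∑ i ∈ Icc 1 (n + 1), (l i - rowLengths b i) = l (n + 1) + ∑ k : Fin n, (l (n - k) - b k) := by
  simp_rw [sum_Icc_succ_top (Nat.le_add_left 1 n), rowLengths_of_lt b n.lt_succ_self,
    ← sum_fin_sub, rowLengths_sub, Nat.sub_zero, add_comm]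

section Determinants

variable {R : Type*} [CommRing R]

lemma det_of_sum_row {ι α : Type*} [Fintype ι] [DecidableEq ι] (s : ι → Finset α)
    (f : ι → α → ι → R) :
    (Matrix.of fun i k ↦ ∑ b ∈ s i, f i b k).det =
      ∑ b ∈ Fintype.piFinset s, (Matrix.of fun i k ↦ f i (b i) k).det := by
  have h : (Matrix.of fun i k ↦ ∑ b ∈ s i, f i b k) = fun i ↦ ∑ b ∈ s i, f i b := by
    ext i k
    simp
  rw [h]
  exact Matrix.detRowAlternating.toMultilinearMap.map_sum_finset f s

lemma det_of_mul_mul {ι : Type*} [Fintype ι] [DecidableEq ι] (a c : ι → R) (A : ι → ι → R) :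
    (Matrix.of fun i j ↦ a i * (c j * A i j)).det =
      (∏ i, a i) * ((∏ j, c j) * (Matrix.of A).det) := by
  rw [← Matrix.det_mul_row, ← Matrix.det_mul_column]
  rfl

lemma det_eq_mul_det_sub_mul_pred {n : ℕ} (A : Matrix (Fin (n + 1)) (Fin (n + 1)) R) (c : Fin n → R)
    (hc : ∀ i : Fin n, A i.succ (Fin.last n) = c i * A i.castSucc (Fin.last n)) :
    A.det = (-1) ^ n * A 0 (Fin.last n) *
      (Matrix.of fun i k : Fin n ↦
        A i.succ k.castSucc - c i * A i.castSucc k.castSucc).det := by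
  let B : Matrix (Fin (n + 1)) (Fin (n + 1)) R :=
    Fin.cons (A 0) fun i k ↦ A i.succ k - c i * A i.castSucc k
  have hAB : A.det = B.det :=
    Matrix.det_eq_of_forall_row_eq_smul_add_pred c (by simp [B]) (by simp [B])
  rw [hAB, Matrix.det_succ_column _ (Fin.last n), Fin.sum_univ_succ, sum_eq_zero, add_zero]
  · simp only [B, Fin.cons_zero, Fin.val_zero, zero_add, Fin.val_last, Fin.succAbove_zero,
      Fin.succAbove_last]
    rfl
  · intro i _
    simp [B, hc]

lemma pow_sub_pow_mul_pow_eq_sum (q : R) (e f i : ℕ) {c d : ℕ} (hcd : c ≤ d) :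
    (q ^ (d + (i + 1))) ^ e - q ^ ((e + f) * (d - c + 1)) * (q ^ (c + i)) ^ e =
      ∑ b ∈ Icc c d, q ^ ((e + f) * (d - b)) * ((1 - q ^ f) * q ^ e * (q ^ (b + i)) ^ e) := by
  induction d, hcd using Nat.le_induction with
  | base =>
    simp only [Nat.sub_self, zero_add, mul_one, Icc_self, sum_singleton, mul_zero, pow_zero,
      one_mul]
    ring
  | succ d hcd ih =>
    have shift : ∑ b ∈ Icc c d,
        q ^ ((e + f) * (d + 1 - b)) * ((1 - q ^ f) * q ^ e * (q ^ (b + i)) ^ e) =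
        q ^ (e + f) * ∑ b ∈ Icc c d,
          q ^ ((e + f) * (d - b)) * ((1 - q ^ f) * q ^ e * (q ^ (b + i)) ^ e) := by
      rw [mul_sum]
      refine sum_congr rfl fun b hb ↦ ?_
      rw [Nat.sub_add_comm (mem_Icc.1 hb).2]
      ring
    rw [sum_Icc_succ_top (by omega), shift, ← ih, Nat.sub_add_comm hcd, Nat.sub_self]
    ring

/-- The alternant `det (x_k ^ (j + 1))` of the partition `l` with at most `n` rows, in the variables
`x_k = q ^ (l (n - k) + k)`. Rows are listed from the last part of `l` to the first, so that no
truncated subtraction occurs in the exponents. -/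
def alternant (q : R) (l : ℕ → ℕ) (n : ℕ) : R :=
  (Matrix.of fun k j : Fin n ↦ (q ^ (l (n - k) + k)) ^ (j + 1 : ℕ)).det

lemma alternant_succ (q : R) {l : ℕ → ℕ} {n : ℕ} (hl : IsPartition l (n + 1)) :
    alternant q l (n + 1) = (-1) ^ n * (∏ j : Fin n, (1 - q ^ (n - j : ℕ)) * q ^ (j + 1 : ℕ)) *
      ∑ b ∈ interlacing l n,
        q ^ ((n + 1) * ∑ i ∈ Icc 1 (n + 1), (l i - rowLengths b i)) *
          alternant q (rowLengths b) n := by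
  have hanti (k : Fin n) : l (n - k + 1) ≤ l (n - k) :=
    hl.apply_le_apply (by omega) (Nat.le_succ _)
  have hsub (k : Fin n) : n + 1 - (k : ℕ) = n - k + 1 := by omega
  have row (k j : Fin n) :
      (q ^ (l (n - k) + (k + 1))) ^ (j + 1 : ℕ) -
          q ^ ((n + 1) * (l (n - k) - l (n - k + 1) + 1)) *
            (q ^ (l (n - k + 1) + k)) ^ (j + 1 : ℕ) =
        ∑ b ∈ Icc (l (n - k + 1)) (l (n - k)), q ^ ((n + 1) * (l (n - k) - b)) *
          ((1 - q ^ (n - j : ℕ)) * q ^ (j + 1 : ℕ) * (q ^ (b + k)) ^ (j + 1 : ℕ)) := by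
    have hn : n + 1 = (j + 1) + (n - j) := by omega
    rw [hn]
    exact pow_sub_pow_mul_pow_eq_sum q _ _ _ (hanti k)
  rw [alternant, det_eq_mul_det_sub_mul_pred _
    fun k ↦ q ^ ((n + 1) * (l (n - k) - l (n - k + 1) + 1))]
  · simp only [Matrix.of_apply, Fin.val_succ, Fin.val_castSucc, Nat.add_sub_add_right, hsub, row,
      Fin.val_zero, Fin.val_last, Nat.sub_zero, add_zero]
    rw [det_of_sum_row, mul_sum, mul_sum]
    refine sum_congr rfl fun b _ ↦ ?_
    rw [det_of_mul_mul, prod_pow_eq_pow_sum, ← mul_sum, sum_sub_rowLengths, alternant]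
    simp only [rowLengths_sub]
    ring
  · intro k
    obtain ⟨s, hs⟩ := Nat.exists_eq_add_of_le (hanti k)
    simp only [Matrix.of_apply, Fin.val_succ, Fin.val_castSucc, Fin.val_last,
      Nat.add_sub_add_right, hsub, hs, Nat.add_sub_cancel_left]
    ring

lemma schur_mul_alternant_zero (q : R) {l : ℕ → ℕ} {n : ℕ} (hl : IsPartition l n) :
    schur q l n * alternant q 0 n = alternant q l n := by
  induction n generalizing l with
  | zero => simp [schur_zero_right q hl, alternant]
  | succ n ih =>
    have interlacing_zero : interlacing 0 n = {0} := by
      ext b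
      simp [interlacing, funext_iff]
    have rowLengths_zero : rowLengths (0 : Fin n → ℕ) = 0 := by
      funext i
      simp [rowLengths]
    rw [alternant_succ q hl, alternant_succ q (.zero (n + 1)), schur_succ q hl, interlacing_zero,
      sum_singleton, rowLengths_zero]
    simp only [Pi.zero_apply, Nat.sub_self, sum_const_zero, mul_zero, pow_zero, one_mul]
    rw [mul_left_comm, sum_mul]
    congr 1
    refine sum_congr rfl fun b hb ↦ ?_
    rw [mul_assoc, ih (isPartition_rowLengths hl hb)]

lemma alternant_eq_prod (q : R) (l : ℕ → ℕ) (r : ℕ) :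
    alternant q l r = (∏ i ∈ Icc 1 r, q ^ (l i + (r - i))) *
      ∏ i ∈ Icc 1 r, ∏ k ∈ Ioc i r, (q ^ (l i + (r - i)) - q ^ (l k + (r - k))) := by
  have hsub (k : Fin r) : q ^ (l (r - k) + k) = q ^ (l (r - k) + (r - (r - k))) := by
    have hk := k.2
    congr
    omega
  rw [← prod_fin_sub r fun i ↦ q ^ (l i + (r - i)),
    ← prod_fin_Ioi_sub r fun k i ↦ q ^ (l i + (r - i)) - q ^ (l k + (r - k)),
    ← Matrix.det_vandermonde, ← Matrix.det_mul_column]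
  simp only [alternant, hsub, pow_succ', Matrix.vandermonde, Matrix.of_apply]

lemma alternant_eq (q : R) {l : ℕ → ℕ} {r : ℕ} (hl : IsPartition l r) :
    alternant q l r = q ^ (∑ i ∈ Icc 1 r, i * l i) * q ^ (∑ i ∈ Icc 1 r, i * (r - i)) *
      ∏ i ∈ Icc 1 r, ∏ k ∈ Ioc i r, (q ^ (l i - l k + (k - i)) - 1) := by
  have factor (i k : ℕ) (hi : i ∈ Icc 1 r) (hk : k ∈ Ioc i r) :
      q ^ (l i + (r - i)) - q ^ (l k + (r - k)) =
        q ^ (l k + (r - k)) * (q ^ (l i - l k + (k - i)) - 1) := by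
    have hlk : l k ≤ l i := hl.apply_le_apply (mem_Icc.1 hi).1 (mem_Ioc.1 hk).1.le
    have hexp : l i + (r - i) = l k + (r - k) + (l i - l k + (k - i)) := by grind
    rw [hexp]
    ring
  have monomial : (∏ i ∈ Icc 1 r, q ^ (l i + (r - i))) *
      ∏ i ∈ Icc 1 r, (q ^ (l i + (r - i))) ^ (i - 1) =
        q ^ (∑ i ∈ Icc 1 r, i * l i) * q ^ (∑ i ∈ Icc 1 r, i * (r - i)) := by
    simp only [← prod_pow_eq_pow_sum, ← prod_mul_distrib]
    refine prod_congr rfl fun i hi ↦ ?_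
    rw [← pow_succ', Nat.sub_add_cancel (mem_Icc.1 hi).1]
    ring
  rw [alternant_eq_prod, prod_congr rfl fun i hi ↦ prod_congr rfl (factor i · hi)]
  simp only [prod_mul_distrib]
  rw [prod_Icc_prod_Ioc_right, ← mul_assoc, monomial]

end Determinants

section Hooks

variable {M : Type*} [CommMonoid M] {l : ℕ → ℕ} {r i : ℕ}

lemma hin_eq (hl : IsPartition l r) {k j : ℕ} (hj : j ∈ Ioc (l (k + 1)) (l k)) :
    hin l r i j = 1 + (l i - j) + (k - i) := by
  obtain ⟨hkj, hjk⟩ := mem_Ioc.1 hj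
  have leg : (Icc (i + 1) r).filter (fun i' ↦ j ≤ l i') = Icc (i + 1) k := by
    ext i'
    simp only [mem_filter, mem_Icc]
    constructor
    · rintro ⟨⟨hi', -⟩, hji'⟩
      refine ⟨hi', not_lt.1 fun hlt ↦ ?_⟩
      have : l i' ≤ l (k + 1) := hl.apply_le_apply k.succ_pos hlt
      omega
    · rintro ⟨hi', hik'⟩
      have : l k ≤ l i' := hl.apply_le_apply (by omega) hik'
      exact ⟨⟨hi', not_lt.1 fun hlt ↦ by grind [hl.eq_zero i' hlt]⟩, by omega⟩
  rw [hin, leg, Nat.card_Icc, Nat.add_sub_add_right]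

lemma prod_Ioc_hin (f : ℕ → M) (hl : IsPartition l r) {k : ℕ} (hi : 1 ≤ i) (hik : i ≤ k) :
    ∏ j ∈ Ioc (l (k + 1)) (l k), f (hin l r i j) =
      ∏ m ∈ Ioc (l i - l k + (k - i)) (l i - l (k + 1) + (k - i)), f m := by
  have hki : l k ≤ l i := hl.apply_le_apply hi hik
  rw [prod_congr rfl fun j hj ↦ congrArg f (hin_eq hl hj)]
  refine prod_nbij' (fun j ↦ 1 + (l i - j) + (k - i)) (fun m ↦ 1 + l i + (k - i) - m)
    ?_ ?_ ?_ ?_ fun _ _ ↦ rfl <;> grind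

lemma prod_hin_mul_prod_sub (f : ℕ → M) (hl : IsPartition l r) {k : ℕ} (hi : 1 ≤ i) (hik : i ≤ k) :
    (∏ j ∈ Ioc (l (k + 1)) (l i), f (hin l r i j)) * ∏ m ∈ Ioc i k, f (l i - l m + (m - i)) =
      ∏ m ∈ Ioc 0 (l i - l (k + 1) + (k - i)), f m := by
  induction k, hik using Nat.le_induction with
  | base => simp [prod_Ioc_hin f hl hi le_rfl]
  | succ k hik ih =>
    have hki : l (k + 1) ≤ l i := hl.apply_le_apply hi (by omega)
    have hk : l (k + 1 + 1) ≤ l (k + 1) := hl.apply_le_apply k.succ_pos (k + 1).le_succ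
    have hsucc : l i - l (k + 1) + (k + 1 - i) = l i - l (k + 1) + (k - i) + 1 := by omega
    have hle : l i - l (k + 1) + (k + 1 - i) ≤ l i - l (k + 1 + 1) + (k + 1 - i) := by omega
    rw [← prod_Ioc_consecutive _ hk hki, prod_Ioc_hin f hl hi (hik.trans k.le_succ),
      prod_Ioc_succ_top (by omega), ← prod_Ioc_consecutive _ (Nat.zero_le _) hle, hsucc,
      prod_Ioc_succ_top (Nat.zero_le _), ← ih]
    ac_rfl

lemma prod_content_mul_prod_sub (f : ℕ → M) (hir : i ≤ r) (m : ℕ) :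
    (∏ j ∈ Icc 1 m, f (r + j - i)) * ∏ k ∈ Ioc i r, f (k - i) = ∏ k ∈ Ioc 0 (m + (r - i)), f k := by
  have shift : ∏ k ∈ Ioc i r, f (k - i) = ∏ k ∈ Ioc 0 (r - i), f k :=
    prod_nbij' (· - i) (· + i) (by grind) (by grind) (by grind) (by grind) (by grind)
  have content : ∏ j ∈ Icc 1 m, f (r + j - i) = ∏ k ∈ Ioc (r - i) (m + (r - i)), f k :=
    prod_nbij' (· + r - i) (· + i - r) (by grind) (by grind) (by grind) (by grind) (by grind)
  rw [content, shift, mul_comm, prod_Ioc_consecutive _ (Nat.zero_le _) (by omega)]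

lemma prod_hin_mul_prod_eq_prod_content_mul_prod (f : ℕ → M) (hl : IsPartition l r)
    (hi : i ∈ Icc 1 r) :
    (∏ j ∈ Icc 1 (l i), f (hin l r i j)) * ∏ k ∈ Ioc i r, f (l i - l k + (k - i)) =
      (∏ j ∈ Icc 1 (l i), f (r + j - i)) * ∏ k ∈ Ioc i r, f (k - i) := by
  obtain ⟨h1i, hir⟩ := mem_Icc.1 hi
  have hooks := prod_hin_mul_prod_sub f hl h1i hir
  rw [hl.eq_zero (r + 1) r.lt_succ_self, Nat.sub_zero] at hooks
  rw [prod_content_mul_prod_sub f hir]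
  exact hooks

lemma alternant_mul_prod_hook {R : Type*} [CommRing R] (q : R) (hl : IsPartition l r) :
    alternant q l r * ∏ i ∈ Icc 1 r, ∏ j ∈ Icc 1 (l i), (q ^ hin l r i j - 1) =
      q ^ (∑ i ∈ Icc 1 r, i * l i) * (∏ i ∈ Icc 1 r, ∏ j ∈ Icc 1 (l i), (q ^ (r + j - i) - 1)) *
        alternant q 0 r := by
  have rows := prod_congr rfl fun i hi ↦
    prod_hin_mul_prod_eq_prod_content_mul_prod (fun m ↦ q ^ m - 1) hl (i := i) hi
  simp only [prod_mul_distrib] at rows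
  rw [alternant_eq q hl, alternant_eq q (.zero r)]
  simp only [Pi.zero_apply, mul_zero, sum_const_zero, pow_zero, one_mul, Nat.sub_self, zero_add]
  linear_combination q ^ (∑ i ∈ Icc 1 r, i * l i) * q ^ (∑ i ∈ Icc 1 r, i * (r - i)) * rows

end Hooks

section Specialization

open Polynomial

lemma alternant_X_zero_ne_zero (r : ℕ) : alternant (X : ℤ[X]) 0 r ≠ 0 := by
  rw [alternant_eq X (.zero r)]
  refine mul_ne_zero (mul_ne_zero (pow_ne_zero _ X_ne_zero) (pow_ne_zero _ X_ne_zero)) ?_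
  refine prod_ne_zero_iff.2 fun i _ ↦ prod_ne_zero_iff.2 fun k hk ↦ ?_
  exact X_pow_sub_C_ne_zero (by grind) (1 : ℤ)

lemma schur_mul_prod_hook {R : Type*} [CommRing R] (q : R) {l : ℕ → ℕ} {r : ℕ}
    (hl : IsPartition l r) :
    schur q l r * ∏ i ∈ Icc 1 r, ∏ j ∈ Icc 1 (l i), (q ^ hin l r i j - 1) =
      q ^ (∑ i ∈ Icc 1 r, i * l i) *
        ∏ i ∈ Icc 1 r, ∏ j ∈ Icc 1 (l i), (q ^ (r + j - i) - 1) := by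
  -- The alternant of `0` may be a zero divisor in `R`, so it is cancelled over `ℤ[X]`.
  have generic : schur (X : ℤ[X]) l r * ∏ i ∈ Icc 1 r, ∏ j ∈ Icc 1 (l i), (X ^ hin l r i j - 1) =
      X ^ (∑ i ∈ Icc 1 r, i * l i) *
        ∏ i ∈ Icc 1 r, ∏ j ∈ Icc 1 (l i), (X ^ (r + j - i) - 1) := by
    refine mul_right_cancel₀ (alternant_X_zero_ne_zero r) ?_
    rw [mul_right_comm, schur_mul_alternant_zero X hl, alternant_mul_prod_hook X hl]
  obtain ⟨φ, hφ⟩ : ∃ φ : ℤ[X] →+* R, φ X = q := ⟨eval₂RingHom (Int.castRingHom R) q, by simp⟩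
  simpa [map_schur φ X hl, map_prod, hφ] using congrArg φ generic

end Specialization

theorem hook_content_formula_general {K : Type*} [Field K] (r : ℕ) (l : ℕ → ℕ)
    (hl : IsPartition l r) (q : K)
    (hq : ∀ i ∈ Icc 1 r, ∀ j ∈ Icc 1 (l i), q ^ hin l r i j ≠ 1) :
    (∑ᶠ t ∈ {t : ℕ → ℕ → ℕ | IsSSYT l r t}, q ^ wt l r t) =
      q ^ (∑ i ∈ Icc 1 r, i * l i) *
        ∏ i ∈ Icc 1 r, ∏ j ∈ Icc 1 (l i), (q ^ (r + j - i) - 1) / (q ^ hin l r i j - 1) := by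
  have hooks_ne_zero : ∏ i ∈ Icc 1 r, ∏ j ∈ Icc 1 (l i), (q ^ hin l r i j - 1) ≠ 0 :=
    prod_ne_zero_iff.2 fun i hi ↦ prod_ne_zero_iff.2 fun j hj ↦ sub_ne_zero.2 (hq i hi j hj)
  simp only [prod_div_distrib]
  rw [mul_div_assoc', eq_div_iff hooks_ne_zero]
  exact schur_mul_prod_hook q hl

end

/-- **Stanley's Hook Content Formula.** For a partition `λ` with at most `r`
rows and any `q` that is not a root of unity,
`s_λ(q, q², …, q^r) = q^{B(λ)} ∏_{(i,j) ∈ [λ]} (q^{r+j-i} - 1)/(q^{h_{(i,j)}(λ)} - 1)`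
where `B(λ) = Σ_i i·λ_i`. -/
theorem hook_content_formula (r : ℕ) (hr0 : 0 < r) (l : ℕ → ℕ)
    (hA : ∀ i, l (i + 1) ≤ l i) (hr : ∀ i, r < i → l i = 0)
    (q : ℂ) (hq : ∀ m : ℕ, 0 < m → q ^ m ≠ 1) :
    (∑ᶠ t ∈ {t : ℕ → ℕ → ℕ | IsSSYT l r t}, q ^ wt l r t) =
      q ^ (∑ i ∈ Finset.Icc 1 r, i * l i) *
        ∏ i ∈ Finset.Icc 1 r, ∏ j ∈ Finset.Icc 1 (l i),
          (q ^ (r + j - i) - 1) / (q ^ hin l r i j - 1) :=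
  hook_content_formula_general r l ⟨(antitone_nat_of_succ_le hA).antitoneOn _, hr⟩ q
    fun i _ j _ ↦ hq _ (by unfold hin; omega)
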